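/- Let a > 0, b ≥ 0 with a + 2b ≥ 1, a + b < 1, and (1 + √(1-4ab))/(2a) > 2. Then the minimal cost of the serial two-spring optimization problem (which is 2) is strictly less than the minimal cost of the parallel problem (which is (1+√(1-4ab))/(2a)). -/

import Mathlib

/-!
In the serial problem both springs cost at least `1`, and `a + 2 * b ≥ 1` says exactly that the
cheapest candidate `c₁ = c₂ = 1` is feasible.

The parallel problem depends only on the total cost `s = c₁ + c₂`. For `s ≥ 1` its constraint reads
`q s ≥ 0` with `q s = a * s ^ 2 - s + b`. Since `q 1 = a + b - 1 < 0`, the point `1` lies strictly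
between the two roots of `q`, so the feasible total costs are those from the larger root upwards.
-/

theorem le_mul_add_div_iff {K : Type*} [Field K] [LinearOrder K] [IsStrictOrderedRing K]
    {a b t x : K} (hx : 0 < x) :
    t ≤ a * x + b / x ↔ 0 ≤ a * x ^ 2 + -t * x + b := by
  have common_denominator : a * x + b / x = (a * x ^ 2 + b) / x := by field_simp
  rw [common_denominator, le_div_iff₀ hx, ← sub_nonneg]
  ring_nf

section Quadratic

variable {a b c x x₀ : ℝ}

-- If the discriminant is negative, then its `√` is `0` and both sides are false.
theorem quadratic_neg_iff (ha : 0 < a) :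
    a * x ^ 2 + b * x + c < 0 ↔
      (-b - √(discrim a b c)) / (2 * a) < x ∧ x < (-b + √(discrim a b c)) / (2 * a) := by
  have complete_square :
      4 * a * (a * x ^ 2 + b * x + c) = (2 * a * x + b) ^ 2 - discrim a b c := by
    rw [discrim]
    ring
  have h2a : 0 < 2 * a := by positivity
  have h4a : 0 < 4 * a := by positivity
  calc
    a * x ^ 2 + b * x + c < 0 ↔ (2 * a * x + b) ^ 2 < discrim a b c := by
      rw [← smul_neg_iff_of_pos_left h4a, smul_eq_mul, complete_square, sub_neg]
    _ ↔ -√(discrim a b c) < 2 * a * x + b ∧ 2 * a * x + b < √(discrim a b c) := Real.sq_lt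
    _ ↔ _ := by
      rw [div_lt_iff₀' h2a, lt_div_iff₀' h2a, neg_sub_comm, sub_lt_iff_lt_add,
        lt_neg_add_iff_add_lt, add_comm b]

theorem quadratic_nonneg_iff_of_neg_of_le (ha : 0 < a) (hneg : a * x₀ ^ 2 + b * x₀ + c < 0)
    (hx : x₀ ≤ x) :
    0 ≤ a * x ^ 2 + b * x + c ↔ (-b + √(discrim a b c)) / (2 * a) ≤ x := by
  have smaller_root_lt : (-b - √(discrim a b c)) / (2 * a) < x :=
    ((quadratic_neg_iff ha).1 hneg).1.trans_le hx
  rw [← not_lt, quadratic_neg_iff ha, and_iff_right smaller_root_lt, not_lt]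

end Quadratic

/-- The costs `c₁ + c₂` of the feasible points of the serial two-spring problem. -/
def serialCosts (a b : ℝ) : Set ℝ :=
  {y | ∃ c₁ c₂ : ℝ, 0 < c₁ ∧ 0 < c₂ ∧
    a * min c₁ c₂ + b * (1 / c₁ + 1 / c₂) ≥ 1 ∧ min c₁ c₂ ≥ 1 ∧ y = c₁ + c₂}

/-- The costs `c₁ + c₂` of the feasible points of the parallel two-spring problem. -/
def parallelCosts (a b : ℝ) : Set ℝ :=
  {y | ∃ c₁ c₂ : ℝ, 0 ≤ c₁ ∧ 0 ≤ c₂ ∧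
    a * (c₁ + c₂) + b / (c₁ + c₂) ≥ 1 ∧ c₁ + c₂ ≥ 1 ∧ y = c₁ + c₂}

section TwoSprings

variable {a b y : ℝ}

theorem isLeast_serialCosts_two (h : 1 ≤ a + 2 * b) : IsLeast (serialCosts a b) 2 := by
  constructor
  · refine ⟨1, 1, one_pos, one_pos, ?_, (min_self 1).ge, one_add_one_eq_two.symm⟩
    rw [min_self]
    linarith
  · rintro _ ⟨c₁, c₂, -, -, -, hmin, rfl⟩
    obtain ⟨hc₁, hc₂⟩ := le_min_iff.1 hmin
    linarith

theorem mem_parallelCosts_iff : y ∈ parallelCosts a b ↔ 1 ≤ y ∧ 1 ≤ a * y + b / y := by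
  constructor
  · rintro ⟨c₁, c₂, -, -, hfeas, hone, rfl⟩
    exact ⟨hone, hfeas⟩
  · rintro ⟨hone, hfeas⟩
    exact ⟨y, 0, by linarith, le_rfl, by rwa [add_zero], by rwa [add_zero], (add_zero y).symm⟩

theorem parallelCosts_eq_Ici (ha : 0 < a) (hab : a + b < 1) :
    parallelCosts a b = Set.Ici ((1 + √(1 - 4 * a * b)) / (2 * a)) := by
  have larger_root_eq : (1 + √(1 - 4 * a * b)) / (2 * a) =
      (-(-1) + √(discrim a (-1) b)) / (2 * a) := by
    rw [discrim, neg_neg, neg_one_sq]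
  have neg_at_one : a * 1 ^ 2 + -1 * 1 + b < 0 := by linarith
  have one_lt_larger_root := ((quadratic_neg_iff ha).1 neg_at_one).2
  ext y
  rw [mem_parallelCosts_iff, Set.mem_Ici, larger_root_eq]
  constructor
  · rintro ⟨hone, hfeas⟩
    rw [← quadratic_nonneg_iff_of_neg_of_le ha neg_at_one hone]
    exact (le_mul_add_div_iff (by linarith)).1 hfeas
  · intro hy
    have hone : 1 ≤ y := one_lt_larger_root.le.trans hy
    refine ⟨hone, (le_mul_add_div_iff (by linarith)).2 ?_⟩
    exact (quadratic_nonneg_iff_of_neg_of_le ha neg_at_one hone).2 hy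

theorem isLeast_parallelCosts (ha : 0 < a) (hab : a + b < 1) :
    IsLeast (parallelCosts a b) ((1 + √(1 - 4 * a * b)) / (2 * a)) := by
  rw [parallelCosts_eq_Ici ha hab]
  exact isLeast_Ici

end TwoSprings

theorem stmt_16 (a b : ℝ) (ha : 0 < a) (hb : 0 ≤ b)
    (h1 : a + 2 * b ≥ 1) (h2 : a + b < 1)
    (h3 : (1 + Real.sqrt (1 - 4 * a * b)) / (2 * a) > 2) :
    IsLeast {y : ℝ | ∃ c₁ c₂ : ℝ, 0 < c₁ ∧ 0 < c₂ ∧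
        a * min c₁ c₂ + b * (1 / c₁ + 1 / c₂) ≥ 1 ∧ min c₁ c₂ ≥ 1 ∧
        y = c₁ + c₂} 2 ∧
      IsLeast {y : ℝ | ∃ c₁ c₂ : ℝ, 0 ≤ c₁ ∧ 0 ≤ c₂ ∧
        a * (c₁ + c₂) + b / (c₁ + c₂) ≥ 1 ∧ c₁ + c₂ ≥ 1 ∧ y = c₁ + c₂}
        ((1 + Real.sqrt (1 - 4 * a * b)) / (2 * a)) ∧
      (2 : ℝ) < (1 + Real.sqrt (1 - 4 * a * b)) / (2 * a) :=
  ⟨isLeast_serialCosts_two h1, isLeast_parallelCosts ha h2, h3⟩
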